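/- arXiv:2111.15049 — 4 statements merged into one kernel-verified Lean document; each statement's English description precedes it below -/
import Mathlib

section
/- Let a > 1 and b > 0 be real numbers satisfying a · arctan(b) = b. Then the function f : ℝ → ℝ defined by f(x) = (a/b) · arctan(b·x) is real analytic at every point of ℝ, is strictly monotone increasing, satisfies f(1) = 1 and f(-1) = -1, maps the open interval (-1,1) bijectively onto (-1,1), and satisfies f'(0) = a. -/
/-!
The map `f` is a positive rescaling of `arctan`, so it inherits analyticity and strict monotonicity
from `arctan`. The relation `a * arctan b = b` is exactly the normalisation `f 1 = 1`, and oddness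
of `arctan` then gives `f (-1) = -1`. A continuous strictly increasing map fixing the endpoints of
an interval maps its interior bijectively onto itself, by the intermediate value theorem. The chain
rule at `0` gives `f' 0 = (a / b) * b = a`.
-/

theorem arctan_family_automorphism
    (a b : ℝ) (ha : 1 < a) (hb : 0 < b) (hab : a * Real.arctan b = b)
    (f : ℝ → ℝ) (hf : ∀ x, f x = (a / b) * Real.arctan (b * x)) :
    (∀ x : ℝ, AnalyticAt ℝ f x) ∧
    StrictMono f ∧
    f 1 = 1 ∧
    f (-1) = -1 ∧
    Set.BijOn f (Set.Ioo (-1 : ℝ) 1) (Set.Ioo (-1 : ℝ) 1) ∧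
    deriv f 0 = a := by
  have hfun : f = fun x => (a / b) * Real.arctan (b * x) := funext hf
  have han : ∀ x : ℝ, AnalyticAt ℝ f x := fun x => by
    have h : ContDiff ℝ ⊤ f := by
      rw [hfun]
      exact contDiff_const.mul (Real.contDiff_arctan.comp (contDiff_const.mul contDiff_id))
    exact h.contDiffAt.analyticAt
  have hmono : StrictMono f := fun x y hxy => by
    rw [hf, hf]
    have hab_pos : 0 < a / b := div_pos (by linarith) hb
    exact mul_lt_mul_of_pos_left
      (Real.arctan_strictMono (mul_lt_mul_of_pos_left hxy hb)) hab_pos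
  have h1 : f 1 = 1 := by
    rw [hf, mul_one, div_mul_eq_mul_div, hab, div_self hb.ne']
  have h2 : f (-1) = -1 := by
    rw [hf, mul_neg, Real.arctan_neg, mul_neg, ← hf, h1]
  refine ⟨han, hmono, h1, h2, ⟨?_, hmono.injective.injOn, ?_⟩, ?_⟩
  · rintro x ⟨hx1, hx2⟩
    exact ⟨h2 ▸ hmono hx1, h1 ▸ hmono hx2⟩
  · have hivt := intermediate_value_Ioo (by norm_num : (-1 : ℝ) ≤ 1)
      (fun x _ => (han x).continuousAt.continuousWithinAt : ContinuousOn f (Set.Icc (-1) 1))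
    rwa [h1, h2] at hivt
  · have hd := (((hasDerivAt_id (0 : ℝ)).const_mul b).arctan).const_mul (a / b)
    rw [hfun]
    refine hd.deriv.trans ?_
    simp [div_mul_cancel₀ a hb.ne']
end

section
/- Let a and b be real numbers with 0 < a < 1 and 0 < b < π/2 satisfying b = a · tan(b). Then the function g : ℝ → ℝ defined by g(x) = (a/b) · tan(b·x) is real analytic at every point of the open interval (-1,1), is strictly monotone increasing on [-1,1], satisfies g(1) = 1 and g(-1) = -1, maps (-1,1) bijectively onto (-1,1), and satisfies g'(0) = a. -/
open Real

/-!
On `[-1, 1]` the argument `b * x` stays in `[-b, b] ⊆ (-π/2, π/2)`, where `cos` is positive and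
`tan = sin / cos` is analytic and strictly increasing; hence so is `g` near and on `[-1, 1]`.
The relation `b = a * tan b` says exactly that `g 1 = 1`, and oddness gives `g (-1) = -1`, so
monotonicity together with the intermediate value theorem yields the bijection of `(-1, 1)`.
Finally the chain rule gives `g' 0 = (a / b) * b / cos 0 ^ 2 = a`.
-/

theorem tan_family_automorphism
    (a b : ℝ) (ha0 : 0 < a) (ha1 : a < 1) (hb0 : 0 < b) (hb1 : b < π / 2)
    (hab : b = a * Real.tan b)
    (g : ℝ → ℝ) (hg : ∀ x, g x = (a / b) * Real.tan (b * x)) :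
    (∀ x ∈ Set.Ioo (-1 : ℝ) 1, AnalyticAt ℝ g x) ∧
    StrictMonoOn g (Set.Icc (-1 : ℝ) 1) ∧
    g 1 = 1 ∧
    g (-1) = -1 ∧
    Set.BijOn g (Set.Ioo (-1 : ℝ) 1) (Set.Ioo (-1 : ℝ) 1) ∧
    deriv g 0 = a := by
  have hmem : ∀ x ∈ Set.Icc (-1 : ℝ) 1, b * x ∈ Set.Ioo (-(π / 2)) (π / 2) := by
    rintro x ⟨hx1, hx2⟩
    constructor <;> nlinarith
  have hgf : g = fun x => (a / b) * (Real.sin (b * x) / Real.cos (b * x)) := by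
    funext x
    rw [hg, Real.tan_eq_sin_div_cos]
  have hanal : ∀ x ∈ Set.Icc (-1 : ℝ) 1, AnalyticAt ℝ g x := by
    intro x hx
    have hc : Real.cos (b * x) ≠ 0 := (Real.cos_pos_of_mem_Ioo (hmem x hx)).ne'
    have hl : AnalyticAt ℝ (fun y : ℝ => b * y) x := analyticAt_const.mul analyticAt_id
    rw [hgf]
    exact analyticAt_const.mul ((Real.analyticAt_sin.comp hl).div (Real.analyticAt_cos.comp hl) hc)
  have hmono : StrictMonoOn g (Set.Icc (-1 : ℝ) 1) := by
    intro x hx y hy hxy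
    rw [hg, hg]
    exact mul_lt_mul_of_pos_left
      (Real.strictMonoOn_tan (hmem x hx) (hmem y hy) (mul_lt_mul_of_pos_left hxy hb0))
      (div_pos ha0 hb0)
  have h1 : g 1 = 1 := by
    rw [hg, mul_one, div_mul_eq_mul_div, ← hab, div_self hb0.ne']
  have hm1 : g (-1) = -1 := by
    rw [hg, mul_neg, Real.tan_neg, mul_neg, ← hg, h1]
  refine ⟨fun x hx => hanal x (Set.Ioo_subset_Icc_self hx), hmono, h1, hm1, ⟨?_, ?_, ?_⟩, ?_⟩
  · intro x hx
    have hx' := Set.Ioo_subset_Icc_self hx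
    constructor
    · rw [← hm1]
      exact hmono (by norm_num) hx' hx.1
    · rw [← h1]
      exact hmono hx' (by norm_num) hx.2
  · exact hmono.injOn.mono Set.Ioo_subset_Icc_self
  · have hcont : ContinuousOn g (Set.Icc (-1 : ℝ) 1) :=
      fun x hx => (hanal x hx).continuousAt.continuousWithinAt
    have hivt := intermediate_value_Ioo (by norm_num : (-1 : ℝ) ≤ 1) hcont
    rwa [h1, hm1] at hivt
  · have hl : HasDerivAt (fun y : ℝ => b * y) b 0 := by
      simpa using (hasDerivAt_id (0 : ℝ)).const_mul b
    have ht : HasDerivAt Real.tan (1 / Real.cos (b * 0) ^ 2) (b * 0) :=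
      Real.hasDerivAt_tan (by simp)
    have hd := (ht.comp (0 : ℝ) hl).const_mul (a / b)
    have hge : g = fun x => (a / b) * (Real.tan ∘ fun y => b * y) x := funext hg
    rw [hge, hd.deriv]
    simp [hb0.ne']
end

section
/- For every real number a there exists a function f : ℝ → ℝ that is real analytic at every point of the open interval (-1,1), maps (-1,1) bijectively onto (-1,1), and satisfies f'(0) = a. -/
/-!
For `a = 0` the cube `x ↦ x ^ 3` works. For `a ≠ 0`, conjugate multiplication by `a` on the line by
the analytic diffeomorphism `x ↦ x / √(1 - x ^ 2)` from `(-1, 1)` onto `ℝ`. The result is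
`stretch a x = a x / √(1 + (a ^ 2 - 1) x ^ 2)`, whose derivative at `0` is `a` and whose inverse is
`stretch a⁻¹` (`stretch_inv_stretch`).
-/

/-- Multiplication by `a` on the line, transported to `(-1, 1)` by `x ↦ x / √(1 - x ^ 2)`. -/
noncomputable def stretch (a x : ℝ) : ℝ := a * x / √(1 + (a ^ 2 - 1) * x ^ 2)

theorem one_sub_sq_pos {x : ℝ} (hx : x ∈ Set.Ioo (-1 : ℝ) 1) : 0 < 1 - x ^ 2 := by
  nlinarith [mul_pos (sub_pos.2 hx.1) (sub_pos.2 hx.2)]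

theorem stretch_radicand_pos (a : ℝ) {x : ℝ} (hx : x ∈ Set.Ioo (-1 : ℝ) 1) :
    0 < 1 + (a ^ 2 - 1) * x ^ 2 := by
  nlinarith [one_sub_sq_pos hx, sq_nonneg (a * x)]

theorem stretch_sq (a : ℝ) {x : ℝ} (hx : x ∈ Set.Ioo (-1 : ℝ) 1) :
    stretch a x ^ 2 = a ^ 2 * x ^ 2 / (1 + (a ^ 2 - 1) * x ^ 2) := by
  rw [stretch, div_pow, Real.sq_sqrt (stretch_radicand_pos a hx).le, mul_pow]

theorem stretch_mapsTo (a : ℝ) :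
    Set.MapsTo (stretch a) (Set.Ioo (-1 : ℝ) 1) (Set.Ioo (-1 : ℝ) 1) := by
  intro x hx
  have h : stretch a x ^ 2 < 1 := by
    rw [stretch_sq a hx, div_lt_one (stretch_radicand_pos a hx)]
    linarith [one_sub_sq_pos hx]
  exact abs_lt.1 ((sq_lt_one_iff_abs_lt_one _).1 h)

theorem stretch_inv_stretch {a : ℝ} (ha : a ≠ 0) {x : ℝ} (hx : x ∈ Set.Ioo (-1 : ℝ) 1) :
    stretch a⁻¹ (stretch a x) = x := by
  have hD := stretch_radicand_pos a hx
  -- The outer radicand is the reciprocal of the inner one.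
  have h : 1 + (a⁻¹ ^ 2 - 1) * stretch a x ^ 2 = (1 + (a ^ 2 - 1) * x ^ 2)⁻¹ := by
    rw [stretch_sq a hx]
    generalize hE : 1 + (a ^ 2 - 1) * x ^ 2 = D at hD ⊢
    have := hD.ne'
    field_simp
    linear_combination -hE
  have hs := (Real.sqrt_pos.2 hD).ne'
  rw [stretch, h, Real.sqrt_inv, stretch]
  generalize √(1 + (a ^ 2 - 1) * x ^ 2) = s at hs ⊢
  field_simp

theorem stretch_bijOn {a : ℝ} (ha : a ≠ 0) :
    Set.BijOn (stretch a) (Set.Ioo (-1 : ℝ) 1) (Set.Ioo (-1 : ℝ) 1) := by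
  refine Set.InvOn.bijOn (f' := stretch a⁻¹) ⟨fun x hx => stretch_inv_stretch ha hx, fun x hx => ?_⟩
    (stretch_mapsTo a) (stretch_mapsTo a⁻¹)
  simpa using stretch_inv_stretch (inv_ne_zero ha) hx

theorem stretch_analyticAt (a : ℝ) {x : ℝ} (hx : x ∈ Set.Ioo (-1 : ℝ) 1) :
    AnalyticAt ℝ (stretch a) x := by
  have hD := stretch_radicand_pos a hx
  have hn : AnalyticAt ℝ (fun x : ℝ => a * x) x := by fun_prop
  have hr : AnalyticAt ℝ (fun x : ℝ => 1 + (a ^ 2 - 1) * x ^ 2) x := by fun_prop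
  have hs : AnalyticAt ℝ (fun x : ℝ => √(1 + (a ^ 2 - 1) * x ^ 2)) x :=
    (hr.contDiffAt.sqrt hD.ne').analyticAt
  exact hn.div hs (Real.sqrt_pos.2 hD).ne'

theorem stretch_deriv_zero (a : ℝ) : deriv (stretch a) 0 = a := by
  have hn : HasDerivAt (fun x : ℝ => a * x) a 0 := by
    simpa using (hasDerivAt_id (0 : ℝ)).const_mul a
  have hr : HasDerivAt (fun x : ℝ => 1 + (a ^ 2 - 1) * x ^ 2) 0 0 := by
    simpa using ((hasDerivAt_pow 2 (0 : ℝ)).const_mul (a ^ 2 - 1)).const_add 1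
  have h := hn.div (hr.sqrt (by simp)) (by simp)
  have h' : HasDerivAt (stretch a) a 0 := h.congr_deriv (by simp)
  exact h'.deriv

theorem cube_bijOn :
    Set.BijOn (fun x : ℝ => x ^ 3) (Set.Ioo (-1 : ℝ) 1) (Set.Ioo (-1 : ℝ) 1) := by
  have hm : StrictMono (fun x : ℝ => x ^ 3) := Odd.strictMono_pow (by decide)
  refine ⟨fun x hx => ?_, hm.injective.injOn, ?_⟩
  · have h1 := hm hx.1
    have h2 := hm hx.2
    norm_num at h1
    exact ⟨h1, by simpa using h2⟩
  · have h := intermediate_value_Ioo (f := fun x : ℝ => x ^ 3) (a := -1) (b := 1) (by norm_num)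
      (by fun_prop)
    norm_num at h
    exact h

theorem exists_automorphism_with_any_derivative (a : ℝ) :
    ∃ f : ℝ → ℝ,
      (∀ x ∈ Set.Ioo (-1 : ℝ) 1, AnalyticAt ℝ f x) ∧
      Set.BijOn f (Set.Ioo (-1 : ℝ) 1) (Set.Ioo (-1 : ℝ) 1) ∧
      deriv f 0 = a := by
  rcases eq_or_ne a 0 with rfl | ha
  · exact ⟨fun x => x ^ 3, fun x _ => by fun_prop, cube_bijOn, by simp⟩
  · exact ⟨stretch a, fun x hx => stretch_analyticAt a hx, stretch_bijOn ha, stretch_deriv_zero a⟩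
end

section
/- For each positive integer n define gₙ : ℝ → ℝ by gₙ(x) = -x³/(3n) - x²/(2n) for x ≤ 0 and gₙ(x) = x²/2 for x ≥ 0, and define g : ℝ → ℝ by g(x) = 0 for x ≤ 0 and g(x) = x²/2 for x ≥ 0. Then: each gₙ is differentiable on the open interval (-1,1) with derivative gₙ'(x) = -x(x+1)/n for -1 < x ≤ 0 and gₙ'(x) = x for 0 ≤ x < 1; each gₙ is injective on (-1,1); the sequence (gₙ) converges uniformly to g on (-1,1); and g restricted to (-1,1) is neither injective nor constant. -/
/-!
On `x ≤ 0` one has `Gₙ x = -x² (2 x + 3) / (6 n)`, whose derivative `-x (x + 1) / n` is positive on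
`(-1, 0)`, and on `x ≥ 0` one has `Gₙ x = x² / 2`. Both branches have value and derivative `0` at
`0`, so they glue to a differentiable function (`hasDerivAt_glue`), strictly increasing on
`(-1, 1)` and hence injective there. The positive branch does not depend on `n`, and the negative
one is bounded by `1 / (2 n)` on `(-1, 0]`, so the convergence is uniform. The limit vanishes on
`(-1, 0]`, which destroys injectivity, but not at `1 / 2`.
-/

/-- Two differentiable functions that agree to first order at `0` glue to a differentiable function,
whose derivative is that of the active branch (of either branch at `0`). -/
lemma hasDerivAt_glue {F p q p' q' : ℝ → ℝ}
    (hF : ∀ x, F x = if x ≤ 0 then p x else q x)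
    (hp : ∀ x, HasDerivAt p (p' x) x) (hq : ∀ x, HasDerivAt q (q' x) x)
    (h0 : p 0 = q 0) (h0' : p' 0 = q' 0) :
    (∀ x ≤ 0, HasDerivAt F (p' x) x) ∧ (∀ x, 0 ≤ x → HasDerivAt F (q' x) x) := by
  have hFp : ∀ x ≤ 0, F x = p x := fun x hx => by rw [hF, if_pos hx]
  have hFq : ∀ x, 0 ≤ x → F x = q x := fun x hx => by
    rcases hx.eq_or_lt with rfl | hx
    · rw [hFp 0 le_rfl, h0]
    · rw [hF, if_neg hx.not_ge]
  have hzero : HasDerivAt F (p' 0) 0 := by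
    have h1 : HasDerivWithinAt F (p' 0) (Set.Iic 0) 0 :=
      (hp 0).hasDerivWithinAt.congr hFp (hFp 0 le_rfl)
    have h2 : HasDerivWithinAt F (p' 0) (Set.Ici 0) 0 := by
      rw [h0']
      exact (hq 0).hasDerivWithinAt.congr hFq (hFq 0 le_rfl)
    have h3 := h1.union h2
    rwa [Set.Iic_union_Ici, hasDerivWithinAt_univ] at h3
  constructor
  · intro x hx
    rcases hx.eq_or_lt with rfl | hx
    · exact hzero
    · refine (hp x).congr_of_eventuallyEq ?_
      filter_upwards [Iio_mem_nhds hx] with y hy using hFp y (le_of_lt hy)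
  · intro x hx
    rcases hx.eq_or_lt with rfl | hx
    · rwa [← h0']
    · refine (hq x).congr_of_eventuallyEq ?_
      filter_upwards [Ioi_mem_nhds hx] with y hy using hFq y (le_of_lt hy)

theorem injective_sequence_noninjective_limit
    (G : ℕ → ℝ → ℝ)
    (hG : ∀ (n : ℕ) (x : ℝ),
      G n x = if x ≤ 0 then -x ^ 3 / (3 * n) - x ^ 2 / (2 * n) else x ^ 2 / 2)
    (g : ℝ → ℝ)
    (hg : ∀ x : ℝ, g x = if x ≤ 0 then 0 else x ^ 2 / 2) :
    (∀ n : ℕ, 1 ≤ n →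
      (∀ x ∈ Set.Ioo (-1 : ℝ) 1, DifferentiableAt ℝ (G n) x) ∧
      (∀ x : ℝ, -1 < x → x ≤ 0 → deriv (G n) x = -x * (x + 1) / n) ∧
      (∀ x : ℝ, 0 ≤ x → x < 1 → deriv (G n) x = x) ∧
      Set.InjOn (G n) (Set.Ioo (-1 : ℝ) 1)) ∧
    (∀ ε : ℝ, 0 < ε → ∃ N : ℕ, ∀ n : ℕ, N ≤ n →
      ∀ x ∈ Set.Ioo (-1 : ℝ) 1, |G n x - g x| < ε) ∧
    ¬ Set.InjOn g (Set.Ioo (-1 : ℝ) 1) ∧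
    ¬ (∀ x ∈ Set.Ioo (-1 : ℝ) 1, ∀ y ∈ Set.Ioo (-1 : ℝ) 1, g x = g y) := by
  refine ⟨fun n hn => ?_, fun ε hε => ?_, ?_, ?_⟩
  · have hn0 : (0 : ℝ) < n := by exact_mod_cast hn
    have hp : ∀ x : ℝ, HasDerivAt (fun x : ℝ => -x ^ 3 / (3 * n) - x ^ 2 / (2 * n))
        (-x * (x + 1) / n) x := fun x => by
      have h := (((hasDerivAt_pow 3 x).neg.div_const (3 * (n : ℝ))).sub
        ((hasDerivAt_pow 2 x).div_const (2 * (n : ℝ))))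
      refine h.congr_deriv ?_
      field_simp
      norm_num
      ring
    have hq : ∀ x : ℝ, HasDerivAt (fun x : ℝ => x ^ 2 / 2) x x := fun x => by
      refine ((hasDerivAt_pow 2 x).div_const 2).congr_deriv ?_
      norm_num
    obtain ⟨hneg, hpos⟩ := hasDerivAt_glue (hG n) hp hq (by simp) (by simp)
    refine ⟨fun x _ => ?_, fun x _ hx => (hneg x hx).deriv, fun x hx _ => (hpos x hx).deriv, ?_⟩
    · rcases le_total x 0 with hx | hx
      · exact (hneg x hx).differentiableAt
      · exact (hpos x hx).differentiableAt
    · have hform : ∀ x : ℝ, -x ^ 3 / (3 * n) - x ^ 2 / (2 * n) = -(x ^ 2 * (2 * x + 3)) / (6 * n) :=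
        fun x => by
          field_simp
          ring
      have hmono : StrictMonoOn (G n) (Set.Ioo (-1 : ℝ) 1) := by
        intro x hx y hy hxy
        rw [hG, hG]
        rcases le_or_gt y 0 with hy0 | hy0
        · have hx0 : x < 0 := hxy.trans_le hy0
          rw [if_pos hx0.le, if_pos hy0, hform, hform]
          refine div_lt_div_of_pos_right ?_ (by positivity)
          -- With `a = -x`, `b = -y` in `[0, 1)`: `a² ≤ a`, `b² ≤ b` and `2 a b ≤ a + b`.
          have hfac : 2 * (x ^ 2 + x * y + y ^ 2) + 3 * (x + y) < 0 := by
            nlinarith [mul_pos_of_neg_of_neg hx0 (sub_neg.2 hxy), hx.1, hy.1,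
              mul_pos (neg_pos.2 hx0) (by linarith [hx.1] : 0 < x + 1),
              mul_nonneg (neg_nonneg.2 hy0) (by linarith [hy.1] : 0 ≤ y + 1),
              mul_nonneg (neg_nonneg.2 hy0) (by linarith [hx.1] : 0 ≤ x + 1),
              mul_nonneg (neg_nonneg.2 hx0.le) (by linarith [hy.1] : 0 ≤ y + 1)]
          nlinarith [mul_pos (sub_pos.2 hxy) (neg_pos.2 hfac)]
        · rw [if_neg hy0.not_ge]
          rcases le_or_gt x 0 with hx0 | hx0
          · rw [if_pos hx0, hform]
            have h1 : 0 ≤ x ^ 2 * (2 * x + 3) :=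
              mul_nonneg (sq_nonneg x) (by linarith [hx.1])
            have h2 : -(x ^ 2 * (2 * x + 3)) / (6 * n) ≤ 0 :=
              div_nonpos_of_nonpos_of_nonneg (by linarith) (by positivity)
            have h3 : 0 < y ^ 2 / 2 := by positivity
            linarith
          · rw [if_neg hx0.not_ge]
            nlinarith
      exact hmono.injOn
  · obtain ⟨N, hN⟩ := exists_nat_gt (1 / ε)
    refine ⟨N, fun n hn x hx => ?_⟩
    have hnN : 1 / ε < n := hN.trans_le (by exact_mod_cast hn)
    have hn0 : (0 : ℝ) < n := (by positivity : 0 < 1 / ε).trans hnN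
    have hεn : 1 < n * ε := (div_lt_iff₀ hε).1 hnN
    rw [hG, hg]
    split_ifs with hx0
    · have hform : -x ^ 3 / (3 * n) - x ^ 2 / (2 * n) - 0 = -(x ^ 2 * (2 * x + 3) / (6 * n)) := by
        field_simp
        ring
      have h1 : 0 ≤ x ^ 2 * (2 * x + 3) := mul_nonneg (sq_nonneg x) (by linarith [hx.1])
      have h2 : x ^ 2 ≤ 1 := by nlinarith [hx.1, hx.2]
      have h3 : x ^ 2 * (2 * x + 3) ≤ 3 := by nlinarith [sq_nonneg x]
      rw [hform, abs_neg, abs_of_nonneg (by positivity), div_lt_iff₀ (by positivity)]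
      nlinarith
    · simpa using hε
  · intro h
    have h' : (-1 / 2 : ℝ) = 0 := h (by norm_num) (by norm_num) (by rw [hg, hg]; norm_num)
    norm_num at h'
  · intro h
    have h' := h 0 (by norm_num) (1 / 2) (by norm_num)
    rw [hg, hg] at h'
    norm_num at h'
end
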